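/- Let n ≥ 11 and let G be a minimizer graph of 𝔾_{n,3}, i.e., a connected simple graph on n vertices with domination number 3 whose spectral radius is minimum among all such graphs. Then there exist integers a ≥ 1, c ≥ 1 and b ≥ 0 with a + b + c = n − 7 such that G is isomorphic to G_2(a,b,c). -/

import Mathlib

open SimpleGraph

/-- Adjacency matrix of a simple graph over ℝ. -/
noncomputable def adjMat {V : Type*} (G : SimpleGraph V) : Matrix V V ℝ :=
  Matrix.of fun i j => @ite ℝ (G.Adj i j) (Classical.propDecidable _) 1 0

/-- Spectral radius: the largest eigenvalue (supremum of the real spectrum)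
of the adjacency matrix. -/
noncomputable def specRad {V : Type*} [Fintype V] [DecidableEq V]
    (G : SimpleGraph V) : ℝ :=
  sSup (spectrum ℝ (adjMat G))

/-- `D` is a dominating set of `G`. -/
def IsDomSet {V : Type*} (G : SimpleGraph V) (D : Finset V) : Prop :=
  ∀ v ∉ D, ∃ u ∈ D, G.Adj u v

/-- The domination number of `G`. -/
noncomputable def domNum {V : Type*} [Fintype V] (G : SimpleGraph V) : ℕ :=
  sInf {k | ∃ D : Finset V, IsDomSet G D ∧ D.card = k}

/-- The tree `G₂(a,b,c)`: the path v1 v4 v5 v2 v6 v7 v3 (vertices `Sum.inl 0, …, Sum.inl 6`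
in path order), with `a` pendant edges at v1, `b` pendant edges at v2 and `c` pendant
edges at v3. -/
def G2graph (a b c : ℕ) : SimpleGraph (Fin 7 ⊕ (Fin a ⊕ Fin b ⊕ Fin c)) :=
  SimpleGraph.fromRel (fun x y =>
    (x = Sum.inl 0 ∧ y = Sum.inl 1) ∨
    (x = Sum.inl 1 ∧ y = Sum.inl 2) ∨
    (x = Sum.inl 2 ∧ y = Sum.inl 3) ∨
    (x = Sum.inl 3 ∧ y = Sum.inl 4) ∨
    (x = Sum.inl 4 ∧ y = Sum.inl 5) ∨
    (x = Sum.inl 5 ∧ y = Sum.inl 6) ∨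
    (∃ j : Fin a, x = Sum.inl 0 ∧ y = Sum.inr (Sum.inl j)) ∨
    (∃ j : Fin b, x = Sum.inl 3 ∧ y = Sum.inr (Sum.inr (Sum.inl j))) ∨
    (∃ j : Fin c, x = Sum.inl 6 ∧ y = Sum.inr (Sum.inr (Sum.inr j))))

/-!
A connected graph with domination number `3` contains a spanning tree that consists of three stars
arranged in a path by two joining edges. Removing an edge strictly lowers the spectral radius `ρ`,
so a minimizer is such a tree as soon as the tree itself has domination number `3`. This is ensured
by a comparison with a suitable `G₂(a,b,a)`, for which a positive test vector gives
`ρ² ≤ ⌊n/3⌋ + 1`: this bound forces every degree to be at most `⌊n/3⌋`, and then two vertices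
cannot dominate.

It remains to find the best joining edges. By Perron vector comparisons, moving an end of a joining
edge to another leaf of the same star strictly lowers `ρ` when that end is a centre with a large
enough Perron entry or is shared by both joining edges. The degree bounds guarantee that the leaves
needed for these moves exist, so in the minimal tree the joining edges have four distinct leaves as
ends, which is the shape `G₂`.
-/

open scoped Matrix

section SpectralRadius

variable {V : Type*}

lemma adjMat_eq_adjMatrix (G : SimpleGraph V) [DecidableRel G.Adj] :
    adjMat G = G.adjMatrix ℝ := by
  ext u v
  simp only [adjMat, Matrix.of_apply, adjMatrix_apply]
  congr

lemma isHermitian_adjMat (G : SimpleGraph V) : (adjMat G).IsHermitian := by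
  classical
  rw [adjMat_eq_adjMatrix]
  exact isHermitian_adjMatrix ℝ G

variable [Fintype V]

lemma adjMat_mulVec_apply (G : SimpleGraph V) [DecidableRel G.Adj] (x : V → ℝ) (v : V) :
    (adjMat G *ᵥ x) v = ∑ u ∈ G.neighborFinset v, x u := by
  rw [adjMat_eq_adjMatrix, adjMatrix_mulVec_apply]

lemma dotProduct_adjMat_mulVec_comm (G : SimpleGraph V) (x y : V → ℝ) :
    x ⬝ᵥ adjMat G *ᵥ y = y ⬝ᵥ adjMat G *ᵥ x := by
  have hsymm : (adjMat G)ᵀ = adjMat G := by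
    rw [← Matrix.conjTranspose_eq_transpose_of_trivial, isHermitian_adjMat]
  rw [Matrix.dotProduct_mulVec, ← Matrix.mulVec_transpose, hsymm, dotProduct_comm]

lemma adjMat_mulVec_mono {K G : SimpleGraph V} (hKG : K ≤ G) {x : V → ℝ} (hx : 0 ≤ x) :
    adjMat K *ᵥ x ≤ adjMat G *ᵥ x := by
  classical
  intro v
  rw [adjMat_mulVec_apply, adjMat_mulVec_apply]
  refine Finset.sum_le_sum_of_subset_of_nonneg (fun u hu => ?_) fun u _ _ => hx u
  rw [mem_neighborFinset] at hu ⊢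
  exact hKG hu

lemma adjMat_mulVec_lt {K G : SimpleGraph V} (hKG : K < G) {x : V → ℝ} (hx : ∀ v, 0 < x v) :
    adjMat K *ᵥ x < adjMat G *ᵥ x := by
  classical
  obtain ⟨u, v, hG, hK⟩ : ∃ u v, G.Adj u v ∧ ¬ K.Adj u v := by
    by_contra! h
    exact hKG.not_ge fun u v => h u v
  refine Pi.lt_def.mpr ⟨adjMat_mulVec_mono hKG.le fun w => (hx w).le, u, ?_⟩
  rw [adjMat_mulVec_apply, adjMat_mulVec_apply]
  refine Finset.sum_lt_sum_of_subset (fun w hw => ?_) ((mem_neighborFinset _ _ _).mpr hG)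
    (mt (mem_neighborFinset _ _ _).mp hK) (hx v) fun w _ _ => (hx w).le
  rw [mem_neighborFinset] at hw ⊢
  exact hKG.le hw

lemma adjMat_mulVec_nonneg (G : SimpleGraph V) {x : V → ℝ} (hx : 0 ≤ x) :
    0 ≤ adjMat G *ᵥ x := by
  classical
  intro v
  rw [adjMat_mulVec_apply]
  exact Finset.sum_nonneg fun u _ => hx u

lemma sum_le_adjMat_mulVec_apply {G : SimpleGraph V} {x : V → ℝ} (hx : 0 ≤ x) {v : V}
    {s : Finset V} (hs : ∀ u ∈ s, G.Adj v u) : ∑ u ∈ s, x u ≤ (adjMat G *ᵥ x) v := by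
  classical
  rw [adjMat_mulVec_apply]
  exact Finset.sum_le_sum_of_subset_of_nonneg
    (fun u hu => (mem_neighborFinset _ _ _).mpr (hs u hu)) fun u _ _ => hx u

lemma eq_zero_of_adjMat_mulVec_eq_smul {G : SimpleGraph V} (hG : G.Connected) {y : V → ℝ} {μ : ℝ}
    (hy : 0 ≤ y) (hμ : adjMat G *ᵥ y = μ • y) {v : V} (hv : y v = 0) : y = 0 := by
  have hadj {a b : V} (hab : G.Adj a b) (ha : y a = 0) : y b = 0 := by
    refine le_antisymm ?_ (hy b)
    calc y b = ∑ u ∈ {b}, y u := (Finset.sum_singleton _ _).symm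
      _ ≤ (adjMat G *ᵥ y) a := sum_le_adjMat_mulVec_apply hy (by simpa using hab)
      _ = 0 := by rw [hμ, Pi.smul_apply, ha, smul_zero]
  have hwalk {a b : V} (p : G.Walk a b) (ha : y a = 0) : y b = 0 := by
    induction p with
    | nil => exact ha
    | cons h _ ih => exact ih (hadj h ha)
  funext w
  obtain ⟨p⟩ := hG.preconnected v w
  exact hwalk p hv

lemma dotProduct_pos_of_forall_pos {z y : V → ℝ} (hz : ∀ v, 0 < z v) (hy : 0 < y) :
    0 < z ⬝ᵥ y := by
  obtain ⟨hy, v, hv⟩ := Pi.lt_def.mp hy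
  exact Finset.sum_pos' (fun u _ => mul_nonneg (hz u).le (hy u))
    ⟨v, Finset.mem_univ v, mul_pos (hz v) hv⟩

variable [DecidableEq V]

lemma finite_spectrum_adjMat (G : SimpleGraph V) : (spectrum ℝ (adjMat G)).Finite := by
  rw [(isHermitian_adjMat G).spectrum_real_eq_range_eigenvalues]
  exact Set.finite_range _

lemma posSemidef_specRad_smul_one_sub_adjMat (G : SimpleGraph V) :
    (specRad G • (1 : Matrix V V ℝ) - adjMat G).PosSemidef := by
  rw [Matrix.posSemidef_iff_isHermitian_and_spectrum_nonneg]
  constructor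
  · exact (Matrix.isHermitian_one.smul (IsSelfAdjoint.all _)).sub (isHermitian_adjMat G)
  · rw [← Algebra.algebraMap_eq_smul_one, ← spectrum.singleton_sub_eq]
    rintro _ ⟨_, rfl, μ, hμ, rfl⟩
    exact sub_nonneg.mpr (le_csSup (finite_spectrum_adjMat G).bddAbove hμ)

lemma specRad_smul_one_sub_adjMat_mulVec (G : SimpleGraph V) (y : V → ℝ) :
    (specRad G • (1 : Matrix V V ℝ) - adjMat G) *ᵥ y = specRad G • y - adjMat G *ᵥ y := by
  rw [Matrix.sub_mulVec, Matrix.smul_mulVec, Matrix.one_mulVec]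

lemma dotProduct_adjMat_mulVec_le (G : SimpleGraph V) (y : V → ℝ) :
    y ⬝ᵥ adjMat G *ᵥ y ≤ specRad G * (y ⬝ᵥ y) := by
  have h := (posSemidef_specRad_smul_one_sub_adjMat G).dotProduct_mulVec_nonneg y
  rwa [specRad_smul_one_sub_adjMat_mulVec, star_trivial, dotProduct_sub, dotProduct_smul,
    smul_eq_mul, sub_nonneg] at h

lemma adjMat_mulVec_eq_of_dotProduct_eq {G : SimpleGraph V} {y : V → ℝ}
    (h : specRad G * (y ⬝ᵥ y) ≤ y ⬝ᵥ adjMat G *ᵥ y) : adjMat G *ᵥ y = specRad G • y := by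
  have hzero := (posSemidef_specRad_smul_one_sub_adjMat G).dotProduct_mulVec_zero_iff y
  rw [specRad_smul_one_sub_adjMat_mulVec, star_trivial, dotProduct_sub, dotProduct_smul,
    smul_eq_mul, sub_eq_zero, sub_eq_zero] at hzero
  exact (hzero.mp (h.antisymm (dotProduct_adjMat_mulVec_le G y))).symm

lemma exists_adjMat_mulVec_eq_specRad_smul [Nonempty V] (G : SimpleGraph V) :
    ∃ y : V → ℝ, y ≠ 0 ∧ adjMat G *ᵥ y = specRad G • y := by
  have hA := isHermitian_adjMat G
  have hspec := hA.spectrum_real_eq_range_eigenvalues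
  have hmem : specRad G ∈ spectrum ℝ (adjMat G) :=
    Set.Nonempty.csSup_mem (hspec ▸ Set.range_nonempty _) (finite_spectrum_adjMat G)
  obtain ⟨i, hi⟩ := hspec ▸ hmem
  refine ⟨hA.eigenvectorBasis i, fun h => ?_, hi ▸ hA.mulVec_eigenvectorBasis i⟩
  exact hA.eigenvectorBasis.orthonormal.ne_zero i (by ext v; exact congrFun h v)

/-- A Perron vector of `G`: an entrywise positive eigenvector of the adjacency matrix for the
spectral radius. -/
structure IsPerronVector (G : SimpleGraph V) (x : V → ℝ) : Prop where
  pos : ∀ v, 0 < x v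
  eigen : adjMat G *ᵥ x = specRad G • x

lemma adjMat_mulVec_abs_eq {G : SimpleGraph V} {y : V → ℝ}
    (hy : adjMat G *ᵥ y = specRad G • y) : adjMat G *ᵥ |y| = specRad G • |y| := by
  classical
  refine adjMat_mulVec_eq_of_dotProduct_eq ?_
  calc specRad G * (|y| ⬝ᵥ |y|) = specRad G * (y ⬝ᵥ y) := by
        simp only [dotProduct, Pi.abs_apply, abs_mul_abs_self]
    _ = y ⬝ᵥ adjMat G *ᵥ y := by rw [hy, dotProduct_smul, smul_eq_mul]
    _ ≤ |y| ⬝ᵥ adjMat G *ᵥ |y| := by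
        refine Finset.sum_le_sum fun v _ => (le_abs_self _).trans ?_
        rw [abs_mul, adjMat_mulVec_apply, adjMat_mulVec_apply]
        exact mul_le_mul_of_nonneg_left (Finset.abs_sum_le_sum_abs _ _) (abs_nonneg _)

lemma exists_isPerronVector {G : SimpleGraph V} (hG : G.Connected) :
    ∃ x : V → ℝ, IsPerronVector G x := by
  have := hG.nonempty
  obtain ⟨y, hy, hyρ⟩ := exists_adjMat_mulVec_eq_specRad_smul G
  have habs := adjMat_mulVec_abs_eq hyρ
  refine ⟨|y|, fun v => (abs_nonneg (y v)).lt_of_ne' fun hv => hy ?_, habs⟩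
  exact (Pi.abs_eq_zero y).mp (eq_zero_of_adjMat_mulVec_eq_smul hG (abs_nonneg y) habs hv)

lemma IsPerronVector.dotProduct_adjMat_mulVec {G : SimpleGraph V} {z : V → ℝ}
    (hz : IsPerronVector G z) (y : V → ℝ) : z ⬝ᵥ adjMat G *ᵥ y = specRad G * (z ⬝ᵥ y) := by
  rw [dotProduct_adjMat_mulVec_comm, hz.eigen, dotProduct_smul, smul_eq_mul, dotProduct_comm]

lemma specRad_le_of_adjMat_mulVec_le {G : SimpleGraph V} (hG : G.Connected) {y : V → ℝ} {μ : ℝ}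
    (hy : 0 < y) (h : adjMat G *ᵥ y ≤ μ • y) : specRad G ≤ μ := by
  obtain ⟨z, hz⟩ := exists_isPerronVector hG
  refine le_of_mul_le_mul_right ?_ (dotProduct_pos_of_forall_pos hz.pos hy)
  calc specRad G * (z ⬝ᵥ y) = z ⬝ᵥ adjMat G *ᵥ y := (hz.dotProduct_adjMat_mulVec y).symm
    _ ≤ z ⬝ᵥ μ • y := dotProduct_le_dotProduct_of_nonneg_left h fun v => (hz.pos v).le
    _ = μ * (z ⬝ᵥ y) := by rw [dotProduct_smul, smul_eq_mul]

lemma specRad_lt_of_adjMat_mulVec_lt {G : SimpleGraph V} (hG : G.Connected) {y : V → ℝ} {μ : ℝ}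
    (hy : 0 ≤ y) (h : adjMat G *ᵥ y < μ • y) : specRad G < μ := by
  obtain ⟨z, hz⟩ := exists_isPerronVector hG
  have hpos := dotProduct_pos_of_forall_pos hz.pos (sub_pos.mpr h)
  rw [dotProduct_sub, hz.dotProduct_adjMat_mulVec, dotProduct_smul, smul_eq_mul, ← sub_mul] at hpos
  exact sub_pos.mp (pos_of_mul_pos_left hpos
    (dotProduct_nonneg_of_nonneg (fun v => (hz.pos v).le) hy))

lemma specRad_lt_specRad {K G : SimpleGraph V} (hK : K.Connected) (hKG : K < G) :
    specRad K < specRad G := by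
  obtain ⟨x, hx⟩ := exists_isPerronVector (hK.mono hKG.le)
  exact specRad_lt_of_adjMat_mulVec_lt hK (fun v => (hx.pos v).le)
    (hx.eigen ▸ adjMat_mulVec_lt hKG hx.pos)

lemma specRad_congr {W : Type*} [Fintype W] [DecidableEq W] {G : SimpleGraph V}
    {H : SimpleGraph W} (e : G ≃g H) : specRad G = specRad H := by
  classical
  have hreindex : Matrix.reindexAlgEquiv ℝ ℝ e.toEquiv (adjMat G) = adjMat H := by
    rw [adjMat_eq_adjMatrix, adjMat_eq_adjMatrix]
    exact e.reindex_adjMatrix ℝ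
  rw [specRad, specRad, ← hreindex, AlgEquiv.spectrum_eq]

end SpectralRadius

section Degree

variable {V : Type*} [Fintype V] {G : SimpleGraph V}

lemma card_le_card_edgeFinset_add_one (hG : G.Connected) [DecidableRel G.Adj] :
    Fintype.card V ≤ G.edgeFinset.card + 1 := by
  have h := hG.card_vert_le_card_edgeSet_add_one
  rwa [Nat.card_eq_fintype_card, Nat.card_eq_fintype_card, ← edgeFinset_card] at h

variable [DecidableEq V] {x : V → ℝ}

lemma IsPerronVector.sum_neighborFinset (hx : IsPerronVector G x) [DecidableRel G.Adj] (v : V) :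
    ∑ u ∈ G.neighborFinset v, x u = specRad G * x v := by
  rw [← adjMat_mulVec_apply, hx.eigen, Pi.smul_apply, smul_eq_mul]

lemma IsPerronVector.sum_le (hx : IsPerronVector G x) {v : V} {s : Finset V}
    (hs : ∀ u ∈ s, G.Adj v u) : ∑ u ∈ s, x u ≤ specRad G * x v := by
  have h := sum_le_adjMat_mulVec_apply (fun w => (hx.pos w).le) hs
  rwa [hx.eigen, Pi.smul_apply, smul_eq_mul] at h

lemma IsPerronVector.le_of_adj (hx : IsPerronVector G x) {u v : V} (huv : G.Adj u v) :
    x v ≤ specRad G * x u := by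
  simpa only [Finset.sum_singleton] using hx.sum_le (s := {v}) (by simpa using huv)

lemma IsPerronVector.eq_of_pendant (hx : IsPerronVector G x) {l c : V}
    (hl : ∀ u, G.Adj l u ↔ u = c) : x c = specRad G * x l := by
  classical
  have hN : G.neighborFinset l = {c} := by
    ext u
    rw [mem_neighborFinset, hl, Finset.mem_singleton]
  rw [← hx.sum_neighborFinset, hN, Finset.sum_singleton]

lemma IsPerronVector.specRad_nonneg (hx : IsPerronVector G x) (v : V) : 0 ≤ specRad G :=
  nonneg_of_mul_nonneg_left (by simpa only [Finset.sum_empty] using hx.sum_le (s := ∅) (by simp))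
    (hx.pos v)

lemma IsPerronVector.add_div_lt (hx : IsPerronVector G x) {l c w z z' : V}
    (hl : ∀ u, G.Adj l u ↔ u = c) (hwc : G.Adj w c) (hwz : G.Adj w z) (hwz' : G.Adj w z')
    (hcz : c ≠ z) (hz'c : z' ≠ c) (hz'z : z' ≠ z) : x l + x z / specRad G < x w := by
  have hxw := hx.sum_le (v := w) (s := {c, z, z'}) (by simp_all)
  rw [Finset.sum_insert (by simp [hcz, hz'c.symm]), Finset.sum_pair hz'z.symm] at hxw
  have hρ : 0 < specRad G := pos_of_mul_pos_left ((hx.pos z).trans_le (hx.le_of_adj hwz))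
    (hx.pos w).le
  refine lt_of_mul_lt_mul_left ?_ hρ.le
  rw [mul_add, mul_div_cancel₀ _ hρ.ne', ← hx.eq_of_pendant hl]
  linarith [hx.pos z']

lemma IsPerronVector.sum_neighborFinset_mul (hx : IsPerronVector G x) [DecidableRel G.Adj]
    (v : V) : ∑ u ∈ G.neighborFinset v, specRad G * x u = specRad G ^ 2 * x v := by
  rw [← Finset.mul_sum, hx.sum_neighborFinset, ← mul_assoc, sq]

lemma IsPerronVector.degree_le_specRad_sq (hx : IsPerronVector G x) [DecidableRel G.Adj] (v : V) :
    (G.degree v : ℝ) ≤ specRad G ^ 2 := by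
  refine le_of_mul_le_mul_right ?_ (hx.pos v)
  rw [← hx.sum_neighborFinset_mul, ← nsmul_eq_mul]
  exact Finset.card_nsmul_le_sum _ _ _ fun u hu =>
    hx.le_of_adj ((mem_neighborFinset _ _ _).mp hu).symm

-- Both sides count walks of length two from `v`: those that return to `v`, and one that does not.
lemma IsPerronVector.degree_mul_add_le (hx : IsPerronVector G x) [DecidableRel G.Adj]
    {v w b : V} (hvw : G.Adj v w) (hwb : G.Adj w b) (hbv : b ≠ v) :
    G.degree v * x v + x b ≤ specRad G ^ 2 * x v := by
  have hw : w ∈ G.neighborFinset v := (mem_neighborFinset _ _ _).mpr hvw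
  calc G.degree v * x v + x b
      = ∑ u ∈ G.neighborFinset v, (x v + if w = u then x b else 0) := by
        rw [Finset.sum_add_distrib, Finset.sum_const, nsmul_eq_mul, Finset.sum_ite_eq, if_pos hw,
          card_neighborFinset_eq_degree]
    _ ≤ ∑ u ∈ G.neighborFinset v, specRad G * x u := by
        refine Finset.sum_le_sum fun u hu => ?_
        have huv : G.Adj u v := ((mem_neighborFinset _ _ _).mp hu).symm
        split_ifs with h
        · subst h
          rw [add_comm, ← Finset.sum_pair hbv]
          exact hx.sum_le (by simp [huv, hwb])
        · simpa only [add_zero] using hx.le_of_adj huv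
    _ = specRad G ^ 2 * x v := hx.sum_neighborFinset_mul v

lemma degree_lt_specRad_sq (hG : G.Connected) [DecidableRel G.Adj] {v w : V} (hwv : w ≠ v)
    (hvw : ¬ G.Adj v w) : (G.degree v : ℝ) < specRad G ^ 2 := by
  obtain ⟨x, hx⟩ := exists_isPerronVector hG
  obtain ⟨p⟩ := hG.preconnected v w
  obtain ⟨d, -, hd, hd'⟩ := p.exists_boundary_dart {u | u = v ∨ G.Adj v u} (Or.inl rfl)
    (not_or.mpr ⟨hwv, hvw⟩)
  obtain ⟨hne, hnadj⟩ := not_or.mp hd'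
  have hadj : G.Adj v d.fst := hd.resolve_left fun h => hnadj (h ▸ d.adj)
  have h := hx.degree_mul_add_le hadj d.adj hne
  exact lt_of_mul_lt_mul_right (lt_of_lt_of_le (lt_add_of_pos_right _ (hx.pos _)) h) (hx.pos v).le

lemma degree_le_of_specRad_sq_le (hG : G.Connected) [DecidableRel G.Adj] {d : ℕ}
    (hd : d + 2 < Fintype.card V) (hρ : specRad G ^ 2 ≤ d + 1) (v : V) : G.degree v ≤ d := by
  by_cases h : ∃ w, w ≠ v ∧ ¬ G.Adj v w
  · obtain ⟨w, hwv, hvw⟩ := h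
    have := (degree_lt_specRad_sq hG hwv hvw).trans_le hρ
    exact Nat.lt_succ_iff.mp (by exact_mod_cast this)
  · push Not at h
    obtain ⟨x, hx⟩ := exists_isPerronVector hG
    have huniv : G.neighborFinset v = Finset.univ.erase v := by
      ext w
      rw [mem_neighborFinset, Finset.mem_erase]
      exact ⟨fun hw => ⟨hw.ne', Finset.mem_univ w⟩, fun hw => h w hw.1⟩
    have hdeg : G.degree v = Fintype.card V - 1 := by
      rw [← card_neighborFinset_eq_degree, huniv, Finset.card_erase_of_mem (Finset.mem_univ v),
        Finset.card_univ]
    have hle : G.degree v ≤ d + 1 := by exact_mod_cast (hx.degree_le_specRad_sq v).trans hρ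
    lia

-- The Rayleigh quotient of the vector with entry `1` on the pendant vertices and `2` elsewhere.
lemma two_le_specRad (hG : G.Connected) [DecidableRel G.Adj] {L : Finset V} (hL : 4 ≤ L.card)
    (hdeg : ∀ v ∈ L, G.degree v = 1) : 2 ≤ specRad G := by
  set e : V → ℝ := fun _ => 1 with he
  set i : V → ℝ := fun v => if v ∈ L then 1 else 0 with hi
  have hAe : adjMat G *ᵥ e = fun v => (G.degree v : ℝ) := by
    ext v
    simp only [adjMat_mulVec_apply, he, Finset.sum_const, nsmul_one, card_neighborFinset_eq_degree]
  have heAe : e ⬝ᵥ adjMat G *ᵥ e = 2 * (G.edgeFinset.card : ℝ) := by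
    rw [hAe]
    simp only [dotProduct, he, one_mul]
    exact_mod_cast G.sum_degrees_eq_twice_card_edges
  have hiAe : i ⬝ᵥ adjMat G *ᵥ e = L.card := by
    rw [hAe]
    simp only [dotProduct, hi, ite_mul, one_mul, zero_mul, Finset.sum_ite_mem, Finset.univ_inter]
    rw [Finset.sum_congr rfl fun v hv => by rw [hdeg v hv], Finset.sum_const, nsmul_eq_mul,
      Nat.cast_one, mul_one]
  have hi0 : 0 ≤ i := fun v => by
    simp only [hi]
    split_ifs <;> norm_num
  have hiAi : 0 ≤ i ⬝ᵥ adjMat G *ᵥ i :=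
    dotProduct_nonneg_of_nonneg hi0 (adjMat_mulVec_nonneg G hi0)
  have hee : e ⬝ᵥ e = Fintype.card V := by simp [dotProduct, he]
  have hie : i ⬝ᵥ e = L.card := by simp [dotProduct, hi, he]
  have hii : i ⬝ᵥ i = L.card := by simp [dotProduct, hi]
  have hrayleigh := dotProduct_adjMat_mulVec_le G ((2 : ℝ) • e - i)
  have hcomm := dotProduct_adjMat_mulVec_comm G e i
  simp only [Matrix.mulVec_sub, Matrix.mulVec_smul, dotProduct_sub, sub_dotProduct, smul_dotProduct,
    dotProduct_smul, smul_eq_mul, dotProduct_comm e i, hcomm, heAe, hiAe, hee, hie, hii]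
    at hrayleigh
  have hedges : (Fintype.card V : ℝ) ≤ G.edgeFinset.card + 1 := by
    exact_mod_cast card_le_card_edgeFinset_add_one hG
  have hL4 : (4 : ℝ) ≤ L.card := by exact_mod_cast hL
  have hLV : (L.card : ℝ) ≤ Fintype.card V := by exact_mod_cast Finset.card_le_univ L
  by_contra! hlt
  nlinarith

end Degree

section EdgeMoves

variable {V : Type*} {K : SimpleGraph V} {x : V → ℝ}

lemma sup_edge_adj_of_ne {u v l w : V} (hu : l ≠ u) (hv : l ≠ v) :
    (K ⊔ edge u v).Adj l w ↔ K.Adj l w := by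
  simp [edge_adj, hu, hv]

variable [DecidableEq V]

lemma smul_single_div {μ : ℝ} (hμ : 0 < μ) (u : V) (a : ℝ) :
    μ • (Pi.single u (a / μ) : V → ℝ) = Pi.single u a := by
  rw [← Pi.single_smul', smul_eq_mul, mul_div_cancel₀ _ hμ.ne']

lemma single_le_of_le (hx : 0 ≤ x) {u : V} {δ : ℝ} (hδ : δ ≤ x u) : Pi.single u δ ≤ x := by
  intro v
  rcases eq_or_ne v u with rfl | hv
  · rwa [Pi.single_eq_same]
  · rw [Pi.single_eq_of_ne hv]
    exact hx v

variable [Fintype V]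

lemma adjMat_sup_edge_mulVec {u v : V} (huv : u ≠ v) (hK : ¬ K.Adj u v) (y : V → ℝ) :
    adjMat (K ⊔ edge u v) *ᵥ y = adjMat K *ᵥ y + Pi.single u (y v) + Pi.single v (y u) := by
  have hadd : adjMat (K ⊔ edge u v) = adjMat K + Matrix.single u v 1 + Matrix.single v u 1 := by
    have hK' : ¬ K.Adj v u := fun h => hK h.symm
    ext i j
    have hadj : (K ⊔ edge u v).Adj i j ↔ K.Adj i j ∨ (u = i ∧ v = j) ∨ (v = i ∧ u = j) := by
      rw [sup_adj, edge_adj]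
      grind
    by_cases h₁ : u = i ∧ v = j
    · obtain ⟨rfl, rfl⟩ := h₁
      simp [adjMat, hadj, hK, huv, huv.symm]
    · by_cases h₂ : v = i ∧ u = j
      · obtain ⟨rfl, rfl⟩ := h₂
        simp [adjMat, hadj, hK', huv, huv.symm]
      · by_cases hij : K.Adj i j <;> simp [adjMat, hadj, hij, h₁, h₂]
  rw [hadd, Matrix.add_mulVec, Matrix.add_mulVec, Matrix.single_mulVec, Matrix.single_mulVec,
    one_mul, one_mul]
  rfl

lemma adjMat_mulVec_single_of_pendant {l c : V} (hl : ∀ u, K.Adj l u ↔ u = c) (δ : ℝ) :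
    adjMat K *ᵥ Pi.single l δ = Pi.single c δ := by
  ext v
  have : K.Adj v l ↔ v = c := by rw [K.adj_comm, hl]
  simp [adjMat, Pi.single_apply, this]

lemma single_le_adjMat_mulVec_single {v c : V} (hvc : K.Adj v c) {δ : ℝ} (hδ : 0 ≤ δ) :
    Pi.single c δ ≤ adjMat K *ᵥ Pi.single v δ := by
  have hnonneg : (0 : V → ℝ) ≤ Pi.single v δ := Pi.single_nonneg.mpr hδ
  intro w
  rcases eq_or_ne w c with rfl | hw
  · simpa using sum_le_adjMat_mulVec_apply hnonneg (s := {v}) (by simpa using hvc.symm)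
  · rw [Pi.single_eq_of_ne hw]
    exact adjMat_mulVec_nonneg K hnonneg w

-- The test vector is `x` with the entry at the leaf `l` raised by `x z / ρ`.
lemma specRad_sup_edge_lt_of_le {c l z : V} (hcz : c ≠ z) (hKcz : ¬ K.Adj c z)
    (hl : ∀ u, K.Adj l u ↔ u = c) (hconn : (K ⊔ edge l z).Connected)
    (hx : IsPerronVector (K ⊔ edge c z) x) (hρ : 1 < specRad (K ⊔ edge c z))
    (hxz : x z ≤ (specRad (K ⊔ edge c z) - 1) * x c) :
    specRad (K ⊔ edge l z) < specRad (K ⊔ edge c z) := by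
  have hlc : l ≠ c := ((hl c).mpr rfl).ne
  have hlz : l ≠ z := fun h => hKcz (h ▸ ((hl c).mpr rfl).symm)
  have hxl := hx.eq_of_pendant fun u => (sup_edge_adj_of_ne hlc hlz).trans (hl u)
  have heigen := hx.eigen
  rw [adjMat_sup_edge_mulVec hcz hKcz] at heigen
  have hxpos := hx.pos
  set ρ := specRad (K ⊔ edge c z)
  have hρ0 : 0 < ρ := one_pos.trans hρ
  set δ : ℝ := x z / ρ with hδ
  have hδz : δ < x z := div_lt_self (hxpos z) hρ
  have hδ0 : 0 ≤ δ := (div_pos (hxpos z) hρ0).le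
  have hgap : ρ • (x + Pi.single l δ) - adjMat (K ⊔ edge l z) *ᵥ (x + Pi.single l δ)
      = Pi.single c (x z - δ) + Pi.single z (x c - x l - δ) := by
    rw [adjMat_sup_edge_mulVec hlz fun h => hcz ((hl z).mp h).symm, Matrix.mulVec_add,
      adjMat_mulVec_single_of_pendant hl, smul_add, smul_single_div hρ0, ← heigen]
    simp only [Pi.add_apply, Pi.single_eq_same, Pi.single_eq_of_ne hlz.symm, add_zero,
      Pi.single_add, Pi.single_sub]
    abel
  have hslack : 0 ≤ x c - x l - δ := by
    refine nonneg_of_mul_nonneg_right ?_ hρ0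
    rw [mul_sub, mul_sub, ← hxl, hδ, mul_div_cancel₀ _ hρ0.ne']
    linarith
  refine specRad_lt_of_adjMat_mulVec_lt (y := x + Pi.single l δ) hconn
    (add_nonneg (fun v => (hxpos v).le) (Pi.single_nonneg.mpr hδ0)) ?_
  rw [← sub_pos, hgap]
  exact add_pos_of_pos_of_nonneg (Pi.single_pos.mpr (sub_pos.mpr hδz)) (Pi.single_nonneg.mpr hslack)

-- The test vector is `x` with `x z / ρ` moved from the entry at `w` to the entry at the leaf `l`.
lemma specRad_sup_edge_lt_of_pendant {c l w z z' : V} (hwz : w ≠ z) (hKwz : ¬ K.Adj w z)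
    (hwc : K.Adj w c) (hwz' : K.Adj w z') (hz'c : z' ≠ c) (hlw : l ≠ w) (hlz : l ≠ z)
    (hl : ∀ u, K.Adj l u ↔ u = c) (hconn : (K ⊔ edge l z).Connected)
    (hx : IsPerronVector (K ⊔ edge w z) x) :
    specRad (K ⊔ edge l z) < specRad (K ⊔ edge w z) := by
  have hcz : c ≠ z := fun h => hKwz (h ▸ hwc)
  have hz'z : z' ≠ z := fun h => hKwz (h ▸ hwz')
  have hadj : (K ⊔ edge w z).Adj w z := Or.inr ((edge_adj _ _ _ _).mpr ⟨Or.inl ⟨rfl, rfl⟩, hwz⟩)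
  have hxz := hx.le_of_adj hadj
  have hslack := hx.add_div_lt (fun u => (sup_edge_adj_of_ne hlw hlz).trans (hl u)) (Or.inl hwc)
    hadj (Or.inl hwz') hcz hz'c hz'z
  have heigen := hx.eigen
  rw [adjMat_sup_edge_mulVec hwz hKwz] at heigen
  have hxpos := hx.pos
  set ρ := specRad (K ⊔ edge w z)
  have hρ0 : 0 < ρ := pos_of_mul_pos_left ((hxpos z).trans_le hxz) (hxpos w).le
  set δ : ℝ := x z / ρ
  have hρδ : ρ * δ = x z := mul_div_cancel₀ _ hρ0.ne'
  have hδ0 : 0 ≤ δ := (div_pos (hxpos z) hρ0).le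
  have hgap : ρ • (x + Pi.single l δ - Pi.single w δ)
      - adjMat (K ⊔ edge l z) *ᵥ (x + Pi.single l δ - Pi.single w δ)
      = Pi.single z (x w - x l - δ) + (adjMat K *ᵥ Pi.single w δ - Pi.single c δ) := by
    rw [adjMat_sup_edge_mulVec hlz fun h => hcz ((hl z).mp h).symm, Matrix.mulVec_sub,
      Matrix.mulVec_add, adjMat_mulVec_single_of_pendant hl, smul_sub, smul_add,
      smul_single_div hρ0, smul_single_div hρ0, ← heigen]
    simp only [Pi.add_apply, Pi.sub_apply, Pi.single_eq_same, Pi.single_eq_of_ne hlz.symm,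
      Pi.single_eq_of_ne hlw, Pi.single_eq_of_ne hwz.symm, add_zero, sub_zero,
      Pi.single_add, Pi.single_sub]
    abel
  have hδw : δ ≤ x w := le_of_mul_le_mul_left (hρδ.trans_le hxz) hρ0
  refine specRad_lt_of_adjMat_mulVec_lt (y := x + Pi.single l δ - Pi.single w δ) hconn ?_ ?_
  · exact sub_nonneg.mpr (le_add_of_le_of_nonneg (single_le_of_le (fun v => (hxpos v).le) hδw)
      (Pi.single_nonneg.mpr hδ0))
  · rw [← sub_pos, hgap]
    exact add_pos_of_pos_of_nonneg (Pi.single_pos.mpr (by linarith))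
      (sub_nonneg.mpr (single_le_adjMat_mulVec_single hwc hδ0))

end EdgeMoves

section Domination

variable {V : Type*} [Fintype V] {G : SimpleGraph V}

lemma domNum_le_card {D : Finset V} (hD : IsDomSet G D) : domNum G ≤ D.card :=
  Nat.sInf_le ⟨D, hD, rfl⟩

lemma exists_isDomSet_card_eq_domNum (G : SimpleGraph V) :
    ∃ D : Finset V, IsDomSet G D ∧ D.card = domNum G :=
  Nat.sInf_mem (s := {k | ∃ D : Finset V, IsDomSet G D ∧ D.card = k})
    ⟨_, Finset.univ, fun v hv => absurd (Finset.mem_univ v) hv, rfl⟩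

lemma card_le_domNum_mul [DecidableRel G.Adj] {d : ℕ} (hd : ∀ v, G.degree v ≤ d) :
    Fintype.card V ≤ domNum G * (d + 1) := by
  classical
  obtain ⟨D, hD, hcard⟩ := exists_isDomSet_card_eq_domNum G
  have hcover : D.biUnion (fun u => insert u (G.neighborFinset u)) = Finset.univ := by
    refine Finset.eq_univ_of_forall fun v => Finset.mem_biUnion.mpr ?_
    by_cases hv : v ∈ D
    · exact ⟨v, hv, Finset.mem_insert_self _ _⟩
    · obtain ⟨u, hu, huv⟩ := hD v hv
      exact ⟨u, hu, Finset.mem_insert_of_mem ((mem_neighborFinset _ _ _).mpr huv)⟩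
  rw [← Finset.card_univ, ← hcover, ← hcard]
  exact Finset.card_biUnion_le_card_mul _ _ _ fun u _ =>
    (Finset.card_insert_le _ _).trans (Nat.succ_le_succ (hd u))

lemma domNum_eq_three_of_specRad_sq_le [DecidableEq V] (hG : G.Connected)
    (hV : 11 ≤ Fintype.card V) (hρ : specRad G ^ 2 ≤ (Fintype.card V / 3 : ℕ) + 1)
    {D : Finset V} (hD : IsDomSet G D) (hcard : D.card ≤ 3) : domNum G = 3 := by
  classical
  have hle : domNum G ≤ 3 := (domNum_le_card hD).trans hcard
  have hge := card_le_domNum_mul (degree_le_of_specRad_sq_le hG (by lia) hρ)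
  interval_cases domNum G <;> lia

end Domination

/-- Three stars that partition `V`, arranged in a path by two joining edges: `star v` is the star
containing `v`, `c i` is the centre of star `i`, and the joining edges are `x₀x₁` and `y₁y₂`, the
subscript of an endpoint being its star. -/
@[ext]
structure StarChain (V : Type*) where
  star : V → Fin 3
  c : Fin 3 → V
  star_c : ∀ i, star (c i) = i
  x₀ : V
  x₁ : V
  y₁ : V
  y₂ : V
  star_x₀ : star x₀ = 0
  star_x₁ : star x₁ = 1
  star_y₁ : star y₁ = 1
  star_y₂ : star y₂ = 2

namespace StarChain

section Basic

variable {V W : Type*} (S : StarChain V)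

/-- The three disjoint stars of a star chain. -/
def forest : SimpleGraph V where
  Adj u v := u ≠ v ∧ (v = S.c (S.star u) ∨ u = S.c (S.star v))
  symm := ⟨fun _ _ h => ⟨h.1.symm, h.2.symm⟩⟩
  loopless := ⟨fun _ h => h.1 rfl⟩

/-- The tree formed by the three stars and the two joining edges of a star chain. -/
def graph : SimpleGraph V :=
  S.forest ⊔ edge S.x₀ S.x₁ ⊔ edge S.y₁ S.y₂

lemma graph_eq_sup_edge_x : S.graph = S.forest ⊔ edge S.y₁ S.y₂ ⊔ edge S.x₀ S.x₁ :=
  sup_right_comm _ _ _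

variable {S}

lemma forest_adj_center {v : V} (hv : v ≠ S.c (S.star v)) : S.forest.Adj v (S.c (S.star v)) :=
  ⟨hv, Or.inl rfl⟩

lemma star_eq_of_forest_adj {u v : V} (h : S.forest.Adj u v) : S.star u = S.star v := by
  rcases h.2 with h | h
  · rw [h, S.star_c]
  · rw [h, S.star_c]

lemma forest_adj_iff {v u : V} (hv : v ≠ S.c (S.star v)) :
    S.forest.Adj v u ↔ u = S.c (S.star v) := by
  refine ⟨fun h => h.2.resolve_right fun hvu => hv ?_, fun h => h ▸ forest_adj_center hv⟩
  rw [star_eq_of_forest_adj h, ← hvu]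

lemma graph_adj_iff_of_leaf {v u : V} (hv : v ≠ S.c (S.star v)) (hx₀ : v ≠ S.x₀) (hx₁ : v ≠ S.x₁)
    (hy₁ : v ≠ S.y₁) (hy₂ : v ≠ S.y₂) : S.graph.Adj v u ↔ u = S.c (S.star v) := by
  rw [graph, sup_edge_adj_of_ne hy₁ hy₂, sup_edge_adj_of_ne hx₀ hx₁, forest_adj_iff hv]

lemma x₀_ne_x₁ : S.x₀ ≠ S.x₁ := fun h => by
  have := S.star_x₁
  simp [← h, S.star_x₀] at this

lemma y₁_ne_y₂ : S.y₁ ≠ S.y₂ := fun h => by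
  have := S.star_y₂
  simp [← h, S.star_y₁] at this

lemma forest_le_graph : S.forest ≤ S.graph := le_sup_left.trans le_sup_left

lemma graph_adj_x : S.graph.Adj S.x₀ S.x₁ :=
  Or.inl (Or.inr ((edge_adj _ _ _ _).mpr ⟨Or.inl ⟨rfl, rfl⟩, x₀_ne_x₁⟩))

lemma graph_adj_y : S.graph.Adj S.y₁ S.y₂ :=
  Or.inr ((edge_adj _ _ _ _).mpr ⟨Or.inl ⟨rfl, rfl⟩, y₁_ne_y₂⟩)

lemma graph_le {G : SimpleGraph V} (hstar : ∀ v, v ≠ S.c (S.star v) → G.Adj v (S.c (S.star v)))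
    (hx : G.Adj S.x₀ S.x₁) (hy : G.Adj S.y₁ S.y₂) : S.graph ≤ G := by
  refine sup_le (sup_le ?_ ((edge_le_iff _).mpr (Or.inr hx))) ((edge_le_iff _).mpr (Or.inr hy))
  rintro u v ⟨hne, h | h⟩
  · exact h ▸ hstar u (h ▸ hne)
  · exact (h ▸ hstar v (h ▸ hne.symm)).symm

lemma reachable_center (v : V) : S.graph.Reachable v (S.c (S.star v)) := by
  by_cases hv : v = S.c (S.star v)
  · rw [← hv]
  · exact (forest_le_graph (forest_adj_center hv)).reachable

variable (S) in
lemma connected_graph : S.graph.Connected := by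
  have h₀₁ : S.graph.Reachable (S.c 0) (S.c 1) := by
    have hx₀ := reachable_center (S := S) S.x₀
    have hx₁ := reachable_center (S := S) S.x₁
    rw [S.star_x₀] at hx₀
    rw [S.star_x₁] at hx₁
    exact hx₀.symm.trans (graph_adj_x.reachable.trans hx₁)
  have h₁₂ : S.graph.Reachable (S.c 1) (S.c 2) := by
    have hy₁ := reachable_center (S := S) S.y₁
    have hy₂ := reachable_center (S := S) S.y₂
    rw [S.star_y₁] at hy₁
    rw [S.star_y₂] at hy₂
    exact hy₁.symm.trans (graph_adj_y.reachable.trans hy₂)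
  have hcenter (i : Fin 3) : S.graph.Reachable (S.c i) (S.c 1) := by
    fin_cases i
    exacts [h₀₁, Reachable.refl _, h₁₂.symm]
  have hreach (v : V) : S.graph.Reachable v (S.c 1) := (reachable_center v).trans (hcenter _)
  exact (connected_iff _).mpr ⟨fun u v => (hreach u).trans (hreach v).symm, ⟨S.c 0⟩⟩

variable (S) in
lemma isDomSet_image_c [DecidableEq V] : IsDomSet S.graph (Finset.univ.image S.c) := by
  intro v hv
  have hmem : S.c (S.star v) ∈ Finset.univ.image S.c :=
    Finset.mem_image_of_mem _ (Finset.mem_univ _)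
  exact ⟨_, hmem, (forest_le_graph (forest_adj_center (ne_of_mem_of_not_mem hmem hv).symm)).symm⟩

variable (S)

/-- The same chain read from the other end. -/
def rev : StarChain V where
  star v := (S.star v).rev
  c i := S.c i.rev
  star_c i := by rw [S.star_c, Fin.rev_rev]
  x₀ := S.y₂
  x₁ := S.y₁
  y₁ := S.x₁
  y₂ := S.x₀
  star_x₀ := by rw [S.star_y₂]; rfl
  star_x₁ := by rw [S.star_y₁]; rfl
  star_y₁ := by rw [S.star_x₁]; rfl
  star_y₂ := by rw [S.star_x₀]; rfl

lemma graph_rev : S.rev.graph = S.graph := by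
  have hforest : S.rev.forest = S.forest := by
    ext u v
    simp only [forest, rev, Fin.rev_rev]
  rw [graph_eq_sup_edge_x S, graph, hforest]
  simp only [rev, edge_comm]

/-- The star chain obtained by relabelling the vertices along `e`. -/
def map (e : V ≃ W) : StarChain W where
  star w := S.star (e.symm w)
  c i := e (S.c i)
  star_c i := by rw [e.symm_apply_apply, S.star_c]
  x₀ := e S.x₀
  x₁ := e S.x₁
  y₁ := e S.y₁
  y₂ := e S.y₂
  star_x₀ := by rw [e.symm_apply_apply, S.star_x₀]
  star_x₁ := by rw [e.symm_apply_apply, S.star_x₁]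
  star_y₁ := by rw [e.symm_apply_apply, S.star_y₁]
  star_y₂ := by rw [e.symm_apply_apply, S.star_y₂]

/-- Relabelling a star chain is an isomorphism of the underlying trees. -/
def mapIso (e : V ≃ W) : S.graph ≃g (S.map e).graph where
  toEquiv := e
  map_rel_iff' := by
    intro u v
    simp only [graph, forest, map, sup_adj, edge_adj, e.symm_apply_apply, ne_eq,
      EmbeddingLike.apply_eq_iff_eq]

end Basic

section Existence

variable {V : Type*} [Fintype V] {G : SimpleGraph V}

lemma exists_perm_of_forall_exists {R : Fin 3 → Fin 3 → Prop} (hsymm : ∀ i j, R i j → R j i)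
    (h : ∀ i, ∃ j, j ≠ i ∧ R i j) : ∃ σ : Equiv.Perm (Fin 3), R (σ 0) (σ 1) ∧ R (σ 1) (σ 2) := by
  choose f hne hR using h
  have hpath : ∀ f : Fin 3 → Fin 3, (∀ i, f i ≠ i) →
      ∃ σ : Equiv.Perm (Fin 3), f (σ 0) = σ 1 ∧ (f (σ 1) = σ 2 ∨ f (σ 2) = σ 1) := by
    decide
  obtain ⟨σ, h₀, h₁ | h₂⟩ := hpath f hne
  · exact ⟨σ, h₀ ▸ hR _, h₁ ▸ hR _⟩
  · exact ⟨σ, h₀ ▸ hR _, hsymm _ _ (h₂ ▸ hR _)⟩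

lemma exists_star_of_domNum_eq_three (hdom : domNum G = 3) :
    ∃ (star : V → Fin 3) (c : Fin 3 → V), (∀ i, star (c i) = i) ∧
      ∀ v, v ≠ c (star v) → G.Adj v (c (star v)) := by
  obtain ⟨D, hD, hcard⟩ := exists_isDomSet_card_eq_domNum G
  let e := (D.equivFinOfCardEq (hcard.trans hdom)).symm
  have hstar (v : V) : ∃ i, v = e i ∨ v ∉ D ∧ G.Adj v (e i) := by
    by_cases hv : v ∈ D
    · exact ⟨e.symm ⟨v, hv⟩, Or.inl (by rw [e.apply_symm_apply])⟩
    · obtain ⟨u, hu, huv⟩ := hD v hv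
      exact ⟨e.symm ⟨u, hu⟩, Or.inr ⟨hv, by rw [e.apply_symm_apply]; exact huv.symm⟩⟩
  choose star hstar using hstar
  refine ⟨star, fun i => e i, fun i => ?_, fun v hv => ((hstar v).resolve_left hv).2⟩
  exact (e.injective (Subtype.ext ((hstar (e i)).resolve_right fun h => h.1 (e i).2))).symm

lemma exists_graph_le (hG : G.Connected) (hdom : domNum G = 3) :
    ∃ S : StarChain V, S.graph ≤ G := by
  obtain ⟨star, c, hc, hadj⟩ := exists_star_of_domNum_eq_three hdom
  obtain ⟨σ, ⟨x₀, x₁, hx₀, hx₁, hx⟩, y₁, y₂, hy₁, hy₂, hy⟩ := exists_perm_of_forall_exists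
    (R := fun i j => ∃ u v, star u = i ∧ star v = j ∧ G.Adj u v)
    (fun i j ⟨u, v, hu, hv, huv⟩ => ⟨v, u, hv, hu, huv.symm⟩) fun i => by
      obtain ⟨p⟩ := hG.preconnected (c i) (c (i + 1))
      obtain ⟨d, -, hd, hd'⟩ := p.exists_boundary_dart {v | star v = i} (hc i) (by simp [hc])
      exact ⟨star d.snd, hd', d.fst, d.snd, hd, rfl, d.adj⟩
  refine ⟨⟨fun v => σ.symm (star v), fun i => c (σ i), fun i => ?_, x₀, x₁, y₁, y₂,
    ?_, ?_, ?_, ?_⟩, graph_le ?_ hx hy⟩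
  · rw [hc, σ.symm_apply_apply]
  · rw [hx₀, σ.symm_apply_apply]
  · rw [hx₁, σ.symm_apply_apply]
  · rw [hy₁, σ.symm_apply_apply]
  · rw [hy₂, σ.symm_apply_apply]
  · intro v
    simpa only [σ.apply_symm_apply] using hadj v

end Existence

section Leaves

variable {V : Type*} [Fintype V] [DecidableEq V] (S : StarChain V)

/-- The vertices of star `i` other than its centre; the ends of joining edges are not excluded. -/
def leaves (i : Fin 3) : Finset V := {v | S.star v = i ∧ v ≠ S.c i}

variable {S} in
lemma mem_leaves {i : Fin 3} {v : V} : v ∈ S.leaves i ↔ S.star v = i ∧ v ≠ S.c i := by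
  simp only [leaves, Finset.mem_filter_univ]

lemma card_leaves_add_three :
    (S.leaves 0).card + (S.leaves 1).card + (S.leaves 2).card + 3 = Fintype.card V := by
  have hfiber (i : Fin 3) : ({v | S.star v = i} : Finset V).card = (S.leaves i).card + 1 := by
    have hinsert : ({v | S.star v = i} : Finset V) = insert (S.c i) (S.leaves i) := by
      ext v
      rw [Finset.mem_filter_univ, Finset.mem_insert, mem_leaves]
      by_cases hv : v = S.c i
      · simp [hv, S.star_c]
      · simp [hv]
    rw [hinsert, Finset.card_insert_of_notMem fun h => (mem_leaves.mp h).2 rfl]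
  have hcard :=
    Finset.card_eq_sum_card_fiberwise (s := Finset.univ) (t := Finset.univ) (f := S.star)
      fun v _ => Finset.mem_coe.mpr (Finset.mem_univ _)
  rw [Fin.sum_univ_three, hfiber, hfiber, hfiber, Finset.card_univ] at hcard
  lia

variable {S}

lemma graph_adj_of_mem_leaves {i : Fin 3} {v : V} (hv : v ∈ S.leaves i) :
    S.graph.Adj (S.c i) v := by
  obtain ⟨rfl, hv⟩ := mem_leaves.mp hv
  exact (forest_le_graph (forest_adj_center hv)).symm

lemma card_leaves_le_degree [DecidableRel S.graph.Adj] (i : Fin 3) :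
    (S.leaves i).card ≤ S.graph.degree (S.c i) := by
  rw [← card_neighborFinset_eq_degree]
  exact Finset.card_le_card fun v hv =>
    (mem_neighborFinset _ _ _).mpr (graph_adj_of_mem_leaves hv)

lemma card_leaves_zero_lt_degree [DecidableRel S.graph.Adj] (hx₀ : S.x₀ = S.c 0) :
    (S.leaves 0).card < S.graph.degree (S.c 0) := by
  have hx₁ : S.x₁ ∉ S.leaves 0 := fun h => by simpa [S.star_x₁] using (mem_leaves.mp h).1
  rw [← card_neighborFinset_eq_degree, ← Order.add_one_le_iff, ← Finset.card_insert_of_notMem hx₁]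
  refine Finset.card_le_card (Finset.insert_subset ?_ fun v hv => ?_)
  · rw [mem_neighborFinset, ← hx₀]
    exact graph_adj_x
  · exact (mem_neighborFinset _ _ _).mpr (graph_adj_of_mem_leaves hv)

variable (S)

lemma two_le_specRad (hV : 11 ≤ Fintype.card V) : 2 ≤ specRad S.graph := by
  classical
  let named : Finset V := Finset.univ.image S.c ∪ {S.x₀, S.x₁, S.y₁, S.y₂}
  have hnamed : named.card ≤ 3 + 4 := (Finset.card_union_le _ _).trans
    (add_le_add Finset.card_image_le Finset.card_le_four)
  refine _root_.two_le_specRad S.connected_graph (L := namedᶜ) ?_ fun v hv => ?_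
  · rw [Finset.card_compl]
    lia
  · simp only [named, Finset.mem_compl, Finset.mem_union, Finset.mem_image, Finset.mem_univ,
      true_and, Finset.mem_insert, Finset.mem_singleton, not_or, not_exists] at hv
    obtain ⟨hcenter, hx₀, hx₁, hy₁, hy₂⟩ := hv
    have hN : S.graph.neighborFinset v = {S.c (S.star v)} := by
      ext u
      rw [mem_neighborFinset, graph_adj_iff_of_leaf (Ne.symm (hcenter _)) hx₀ hx₁ hy₁ hy₂,
        Finset.mem_singleton]
    rw [← card_neighborFinset_eq_degree, hN, Finset.card_singleton]

lemma domNum_graph_eq_three (hV : 11 ≤ Fintype.card V)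
    (hρ : specRad S.graph ^ 2 ≤ (Fintype.card V / 3 : ℕ) + 1) : domNum S.graph = 3 :=
  domNum_eq_three_of_specRad_sq_le S.connected_graph hV hρ S.isDomSet_image_c
    Finset.card_image_le

end Leaves

end StarChain

section G2

/-- `G2graph a b c` as a star chain; the stars are centred at `v1`, `v2`, `v3`. -/
def G2chain (a b c : ℕ) : StarChain (Fin 7 ⊕ (Fin a ⊕ Fin b ⊕ Fin c)) where
  star
    | Sum.inl i => ![0, 0, 1, 1, 1, 2, 2] i
    | Sum.inr (Sum.inl _) => 0
    | Sum.inr (Sum.inr (Sum.inl _)) => 1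
    | Sum.inr (Sum.inr (Sum.inr _)) => 2
  c i := Sum.inl (![0, 3, 6] i)
  star_c i := by fin_cases i <;> rfl
  x₀ := Sum.inl 1
  x₁ := Sum.inl 2
  y₁ := Sum.inl 4
  y₂ := Sum.inl 5
  star_x₀ := rfl
  star_x₁ := rfl
  star_y₁ := rfl
  star_y₂ := rfl

lemma G2chain_graph (a b c : ℕ) : (G2chain a b c).graph = G2graph a b c := by
  ext u v
  rcases u with i | j | j | j <;> rcases v with i' | j' | j' | j' <;>
    simp only [StarChain.graph, StarChain.forest, G2chain, G2graph, fromRel_adj, sup_adj, edge_adj,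
      ne_eq, Sum.inl.injEq, reduceCtorEq, Sum.inr.injEq, and_false, false_and, exists_false,
      or_false, false_or, not_false_eq_true, true_and, exists_and_left, exists_eq', and_true]
  · revert i i'
    decide
  all_goals simp only [Matrix.cons_val, iff_self]

lemma adjMat_G2graph_mulVec {a b c : ℕ} (y : Fin 7 ⊕ (Fin a ⊕ Fin b ⊕ Fin c) → ℝ) :
    adjMat (G2graph a b c) *ᵥ y = Sum.elim
      ![y (.inl 1) + ∑ j, y (.inr (.inl j)), y (.inl 0) + y (.inl 2), y (.inl 1) + y (.inl 3),
        y (.inl 2) + y (.inl 4) + ∑ j, y (.inr (.inr (.inl j))), y (.inl 3) + y (.inl 5),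
        y (.inl 4) + y (.inl 6), y (.inl 5) + ∑ j, y (.inr (.inr (.inr j)))]
      (Sum.elim (fun _ => y (.inl 0)) (Sum.elim (fun _ => y (.inl 3)) fun _ => y (.inl 6))) := by
  ext (i | j | j | j)
  · fin_cases i <;> simp [Matrix.mulVec, dotProduct, adjMat, G2graph, Fin.sum_univ_seven]
  all_goals simp [Matrix.mulVec, dotProduct, adjMat, G2graph]

variable {a b : ℕ} {s : ℝ}

/-- A positive vector witnessing `specRad (G2graph a b a) ≤ √s`: it satisfies the eigenvalue
equations for `√s` at all vertices except `v2`. -/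
noncomputable def testVec (a b : ℕ) (s : ℝ) : Fin 7 ⊕ (Fin a ⊕ Fin b ⊕ Fin a) → ℝ :=
  Sum.elim
    ![√s, s - a, √s * (s - a - 1), (s - a) * (s - 1) - s, √s * (s - a - 1), s - a, √s]
    (Sum.elim (fun _ => 1) (Sum.elim (fun _ => ((s - a) * (s - 1) - s) / √s) fun _ => 1))

lemma testVec_pos (ha : (a : ℝ) + 1 < s) (hA : 0 < (s - a) * (s - 1) - s) :
    0 < testVec a b s := by
  have hs : 0 < s := by linarith [a.cast_nonneg (α := ℝ)]
  have hsa : 0 < s - a := by linarith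
  have hsa' : 0 < s - a - 1 := by linarith
  refine Pi.lt_def.mpr ⟨?_, Sum.inl 0, Real.sqrt_pos.mpr hs⟩
  rintro (i | j | j | j) <;> simp only [testVec, Sum.elim_inl, Sum.elim_inr, Pi.zero_apply]
  · fin_cases i <;> dsimp <;> positivity
  all_goals positivity

lemma adjMat_G2graph_mulVec_testVec_le (hs : 0 < s)
    (hB : 2 * s * (s - a - 1) ≤ (s - b) * ((s - a) * (s - 1) - s)) :
    adjMat (G2graph a b a) *ᵥ testVec a b s ≤ √s • testVec a b s := by
  have hq : 0 < √s := Real.sqrt_pos.mpr hs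
  have hqq : √s ^ 2 = s := Real.sq_sqrt hs.le
  have hv2 : √s * (s - a - 1) + √s * (s - a - 1) + b * (((s - a) * (s - 1) - s) / √s) ≤
      √s * ((s - a) * (s - 1) - s) := by
    have hdiff : √s * ((s - a) * (s - 1) - s) -
        (√s * (s - a - 1) + √s * (s - a - 1) + b * (((s - a) * (s - 1) - s) / √s)) =
        ((s - b) * ((s - a) * (s - 1) - s) - 2 * s * (s - a - 1)) / √s := by
      rw [eq_div_iff hq.ne']
      field_simp
      rw [hqq]
      ring
    rw [← sub_nonneg, hdiff]
    exact div_nonneg (sub_nonneg.mpr hB) hq.le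
  rw [adjMat_G2graph_mulVec]
  rintro (i | j | j | j) <;> simp only [testVec, Sum.elim_inl, Sum.elim_inr, Pi.smul_apply,
    smul_eq_mul, Finset.sum_const, Finset.card_univ, Fintype.card_fin, nsmul_eq_mul]
  · fin_cases i <;> dsimp <;> first | exact hv2 | nlinarith
  · exact (mul_one _).ge
  · exact (mul_div_cancel₀ _ hq.ne').ge
  · exact (mul_one _).ge

lemma specRad_G2graph_sq_le (ha : (a : ℝ) + 1 < s) (hA : 0 < (s - a) * (s - 1) - s)
    (hB : 2 * s * (s - a - 1) ≤ (s - b) * ((s - a) * (s - 1) - s)) :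
    specRad (G2graph a b a) ^ 2 ≤ s := by
  have hs : 0 < s := by linarith [a.cast_nonneg (α := ℝ)]
  have hconn : (G2graph a b a).Connected := G2chain_graph a b a ▸ (G2chain a b a).connected_graph
  obtain ⟨x, hx⟩ := exists_isPerronVector hconn
  have hle : specRad (G2graph a b a) ≤ √s := specRad_le_of_adjMat_mulVec_le hconn
    (testVec_pos ha hA) (adjMat_G2graph_mulVec_testVec_le hs hB)
  exact (Real.le_sqrt (hx.specRad_nonneg (Sum.inl 0)) hs.le).mp hle

lemma exists_specRad_G2graph_sq_le {n : ℕ} (hn : 11 ≤ n) :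
    ∃ a b : ℕ, 7 + (a + (b + a)) = n ∧ specRad (G2graph a b a) ^ 2 ≤ (n / 3 : ℕ) + 1 := by
  obtain ⟨k, hk⟩ : ∃ k, n / 3 = k + 3 := ⟨n / 3 - 3, by lia⟩
  have hk0 : (0 : ℝ) ≤ k := k.cast_nonneg
  rw [hk]
  obtain h | h | h : n = 3 * (k + 3) ∨ n = 3 * (k + 3) + 1 ∨ n = 3 * (k + 3) + 2 := by lia
  · refine ⟨k + 1, k, by lia, specRad_G2graph_sq_le ?_ ?_ ?_⟩ <;> push_cast <;> nlinarith [hk0]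
  · have hk1 : (1 : ℝ) ≤ k := by exact_mod_cast (by lia : 1 ≤ k)
    refine ⟨k + 1, k + 1, by lia, specRad_G2graph_sq_le ?_ ?_ ?_⟩ <;> push_cast <;> nlinarith
  · refine ⟨k + 2, k, by lia, specRad_G2graph_sq_le ?_ ?_ ?_⟩ <;> push_cast <;> nlinarith

lemma exists_starChain_specRad_sq_le {V : Type*} [Fintype V] [DecidableEq V]
    (hV : 11 ≤ Fintype.card V) :
    ∃ S : StarChain V, specRad S.graph ^ 2 ≤ (Fintype.card V / 3 : ℕ) + 1 := by
  obtain ⟨a, b, hab, hρ⟩ := exists_specRad_G2graph_sq_le hV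
  let e : Fin 7 ⊕ (Fin a ⊕ Fin b ⊕ Fin a) ≃ V := Fintype.equivOfCardEq (by simpa using hab)
  exact ⟨(G2chain a b a).map e, by rwa [← specRad_congr ((G2chain a b a).mapIso e), G2chain_graph]⟩

end G2

namespace StarChain

section Minimal

variable {V : Type*} {S : StarChain V}

lemma not_forest_sup_edge_y_adj {u v : V} (hu : S.star u = 0) (hv : S.star v = 1) :
    ¬ (S.forest ⊔ edge S.y₁ S.y₂).Adj u v := by
  rw [sup_adj, edge_adj]
  rintro (h | ⟨⟨rfl, -⟩ | ⟨rfl, -⟩, -⟩)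
  · simpa [hu, hv] using star_eq_of_forest_adj h
  · simp [S.star_y₁] at hu
  · simp [S.star_y₂] at hu

lemma connected_forest_sup_edge {u v : V} (hu : S.star u = 0) (hv : S.star v = 1) :
    (S.forest ⊔ edge S.y₁ S.y₂ ⊔ edge u v).Connected :=
  graph_eq_sup_edge_x { S with x₀ := u, x₁ := v, star_x₀ := hu, star_x₁ := hv } ▸ connected_graph _

variable [DecidableEq V]

/-- The same chain with the centre of star `i` replaced by another vertex `w` of that star. -/
def recenter (S : StarChain V) (i : Fin 3) (w : V) (hw : S.star w = i) : StarChain V where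
  __ := S
  c := Function.update S.c i w
  star_c j := by
    rcases eq_or_ne j i with rfl | hj
    · rw [Function.update_self, hw]
    · rw [Function.update_of_ne hj, S.star_c]

/-- The chain in which `w` is moved to star `j` and `uv` replaces the joining edge `x₀x₁`. -/
def reassign (S : StarChain V) (w : V) (j : Fin 3) (u v : V) (hw : w ≠ S.c (S.star w))
    (hy₁ : S.y₁ ≠ w) (hy₂ : S.y₂ ≠ w) (hu : Function.update S.star w j u = 0)
    (hv : Function.update S.star w j v = 1) : StarChain V where
  __ := S
  star := Function.update S.star w j
  star_c i := by
    rw [Function.update_of_ne, S.star_c]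
    rintro rfl
    exact hw (by rw [S.star_c])
  x₀ := u
  x₁ := v
  star_x₀ := hu
  star_x₁ := hv
  star_y₁ := by rw [Function.update_of_ne hy₁, S.star_y₁]
  star_y₂ := by rw [Function.update_of_ne hy₂, S.star_y₂]

lemma graph_reassign_le {w u v : V} {j : Fin 3} (hw : w ≠ S.c (S.star w)) (hy₁ : S.y₁ ≠ w)
    (hy₂ : S.y₂ ≠ w) (hu : Function.update S.star w j u = 0)
    (hv : Function.update S.star w j v = 1) (hwj : S.graph.Adj w (S.c j))
    (huv : S.graph.Adj u v) : (S.reassign w j u v hw hy₁ hy₂ hu hv).graph ≤ S.graph := by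
  refine graph_le (fun t ht => ?_) huv graph_adj_y
  change t ≠ S.c (Function.update S.star w j t) at ht
  change S.graph.Adj t (S.c (Function.update S.star w j t))
  rcases eq_or_ne t w with rfl | htw
  · rwa [Function.update_self]
  · rw [Function.update_of_ne htw] at ht ⊢
    exact forest_le_graph (forest_adj_center ht)

variable [Fintype V]

lemma forest_sup_edge_y_adj_iff {i : Fin 3} {l u : V} (hl : l ∈ S.leaves i) (hy₁ : l ≠ S.y₁)
    (hy₂ : l ≠ S.y₂) : (S.forest ⊔ edge S.y₁ S.y₂).Adj l u ↔ u = S.c i := by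
  obtain ⟨rfl, hl⟩ := mem_leaves.mp hl
  rw [sup_edge_adj_of_ne hy₁ hy₂, forest_adj_iff hl]

lemma ne_of_mem_leaves {i : Fin 3} {l u : V} (hl : l ∈ S.leaves i) (hu : S.star u ≠ i) : l ≠ u :=
  fun h => hu (h ▸ (mem_leaves.mp hl).1)

-- With at most two vertices, a star has both as possible centres.
lemma graph_recenter_le {i : Fin 3} {w : V} (hw : w ∈ S.leaves i)
    (hsub : ∀ v ∈ S.leaves i, v = w) : (S.recenter i w (mem_leaves.mp hw).1).graph ≤ S.graph := by
  refine graph_le (fun v hv => ?_) graph_adj_x graph_adj_y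
  change v ≠ Function.update S.c i w (S.star v) at hv
  change S.graph.Adj v (Function.update S.c i w (S.star v))
  rcases eq_or_ne (S.star v) i with hi | hi
  · rw [hi, Function.update_self] at hv ⊢
    obtain rfl : v = S.c i := by
      by_contra hc
      exact hv (hsub v (mem_leaves.mpr ⟨hi, hc⟩))
    exact graph_adj_of_mem_leaves hw
  · rw [Function.update_of_ne hi] at hv ⊢
    exact forest_le_graph (forest_adj_center hv)

lemma specRad_mul_apply_x₁ {x : V → ℝ} (hx : IsPerronVector S.graph x) (hx₁ : S.x₁ ≠ S.c 1)
    (hxy : S.x₁ ≠ S.y₁) : specRad S.graph * x S.x₁ = x S.x₀ + x (S.c 1) := by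
  classical
  have hne : S.x₀ ≠ S.c 1 := fun h => by simpa [h, S.star_c] using S.star_x₀
  have hleaf : S.x₁ ∈ S.leaves 1 := mem_leaves.mpr ⟨S.star_x₁, hx₁⟩
  have hN : S.graph.neighborFinset S.x₁ = {S.x₀, S.c 1} := by
    ext u
    rw [mem_neighborFinset, graph_eq_sup_edge_x, sup_adj, forest_sup_edge_y_adj_iff hleaf hxy
      (ne_of_mem_leaves hleaf (by simp [S.star_y₂])), edge_adj, Finset.mem_insert,
      Finset.mem_singleton]
    have := S.x₀_ne_x₁
    grind
  rw [← hx.sum_neighborFinset, hN, Finset.sum_pair hne]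

/-- The tree of `S` has the least spectral radius among the trees of star chains on `V`. -/
def IsMin (S : StarChain V) : Prop :=
  ∀ T : StarChain V, specRad S.graph ≤ specRad T.graph

namespace IsMin

variable {T : StarChain V} {x : V → ℝ} {l : V}

lemma graph_eq_of_le (hS : S.IsMin) (h : T.graph ≤ S.graph) : T.graph = S.graph := by
  by_contra hne
  exact (specRad_lt_specRad T.connected_graph (lt_of_le_of_ne h hne)).not_ge (hS T)

lemma of_graph_le (hS : S.IsMin) (h : T.graph ≤ S.graph) : T.IsMin := fun U =>
  hS.graph_eq_of_le h ▸ hS U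

lemma rev (hS : S.IsMin) : S.rev.IsMin := hS.of_graph_le S.graph_rev.le

lemma specRad_le_forest_sup_edge (hS : S.IsMin) {u v : V} (hu : S.star u = 0)
    (hv : S.star v = 1) : specRad S.graph ≤ specRad (S.forest ⊔ edge S.y₁ S.y₂ ⊔ edge u v) :=
  graph_eq_sup_edge_x { S with x₀ := u, x₁ := v, star_x₀ := hu, star_x₁ := hv } ▸ hS _

lemma specRad_sq_le (hS : S.IsMin) (hV : 11 ≤ Fintype.card V) :
    specRad S.graph ^ 2 ≤ (Fintype.card V / 3 : ℕ) + 1 := by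
  obtain ⟨T, hT⟩ := exists_starChain_specRad_sq_le hV
  exact (pow_le_pow_left₀ (zero_le_two.trans (S.two_le_specRad hV)) (hS T) 2).trans hT

lemma degree_le (hS : S.IsMin) (hV : 11 ≤ Fintype.card V) [DecidableRel S.graph.Adj] (v : V) :
    S.graph.degree v ≤ Fintype.card V / 3 :=
  degree_le_of_specRad_sq_le S.connected_graph (by lia) (hS.specRad_sq_le hV) v

lemma card_leaves_le (hS : S.IsMin) (hV : 11 ≤ Fintype.card V) (i : Fin 3) :
    (S.leaves i).card ≤ Fintype.card V / 3 := by
  classical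
  exact (card_leaves_le_degree i).trans (hS.degree_le hV _)

lemma lt_of_x₀_eq (hS : S.IsMin) (hV : 11 ≤ Fintype.card V) (hx : IsPerronVector S.graph x)
    (hx₀ : S.x₀ = S.c 0) (hl : l ∈ S.leaves 0) : x (S.c 0) < x S.x₁ := by
  by_contra! hle
  have hρ := S.two_le_specRad hV
  have hle' := hle.trans (le_mul_of_one_le_left (hx.pos (S.c 0)).le
    (show 1 ≤ specRad S.graph - 1 by linarith))
  have hl₀ := (mem_leaves.mp hl).1
  refine (hS.specRad_le_forest_sup_edge hl₀ S.star_x₁).not_gt ?_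
  have hgraph := S.graph_eq_sup_edge_x
  rw [hx₀] at hgraph
  rw [hgraph] at hx hle' hρ ⊢
  exact specRad_sup_edge_lt_of_le (hx₀ ▸ x₀_ne_x₁)
    (not_forest_sup_edge_y_adj (S.star_c 0) S.star_x₁)
    (fun u => forest_sup_edge_y_adj_iff hl (ne_of_mem_leaves hl (by simp [S.star_y₁]))
      (ne_of_mem_leaves hl (by simp [S.star_y₂])))
    (connected_forest_sup_edge hl₀ S.star_x₁) hx (one_lt_two.trans_le hρ) hle'

lemma lt_of_x₁_eq (hS : S.IsMin) (hV : 11 ≤ Fintype.card V) (hx : IsPerronVector S.graph x)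
    (hx₁ : S.x₁ = S.c 1) (hl : l ∈ S.leaves 1) (hly₁ : l ≠ S.y₁) :
    x (S.c 1) < x S.x₀ := by
  by_contra! hle
  have hρ := S.two_le_specRad hV
  have hle' := hle.trans (le_mul_of_one_le_left (hx.pos (S.c 1)).le
    (show 1 ≤ specRad S.graph - 1 by linarith))
  have hl₁ := (mem_leaves.mp hl).1
  refine (hS.specRad_le_forest_sup_edge S.star_x₀ hl₁).not_gt ?_
  have hgraph := S.graph_eq_sup_edge_x
  rw [hx₁, edge_comm S.x₀] at hgraph
  rw [hgraph] at hx hle' hρ ⊢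
  have hconn := connected_forest_sup_edge S.star_x₀ hl₁
  rw [edge_comm S.x₀] at hconn ⊢
  exact specRad_sup_edge_lt_of_le (hx₁ ▸ x₀_ne_x₁.symm)
    (fun h => not_forest_sup_edge_y_adj S.star_x₀ (S.star_c 1) h.symm)
    (fun u => forest_sup_edge_y_adj_iff hl hly₁ (ne_of_mem_leaves hl (by simp [S.star_y₂])))
    hconn hx (one_lt_two.trans_le hρ) hle'

lemma eq_y₁_of_x₁_eq_y₁ (hS : S.IsMin) (hx₁ : S.x₁ ≠ S.c 1) (hxy : S.x₁ = S.y₁)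
    (hl : l ∈ S.leaves 1) : l = S.y₁ := by
  by_contra hly₁
  have hl₁ := (mem_leaves.mp hl).1
  refine (hS.specRad_le_forest_sup_edge S.star_x₀ hl₁).not_gt ?_
  obtain ⟨x, hx⟩ := exists_isPerronVector S.connected_graph
  have hgraph := S.graph_eq_sup_edge_x
  rw [edge_comm S.x₀] at hgraph
  rw [hgraph] at hx ⊢
  have hconn := connected_forest_sup_edge S.star_x₀ hl₁
  rw [edge_comm S.x₀] at hconn ⊢
  have hx₁c : S.forest.Adj S.x₁ (S.c 1) := S.star_x₁ ▸ forest_adj_center (S.star_x₁.symm ▸ hx₁)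
  have hx₁y₂ : (edge S.y₁ S.y₂).Adj S.x₁ S.y₂ :=
    (edge_adj _ _ _ _).mpr ⟨Or.inl ⟨hxy, rfl⟩, hxy ▸ y₁_ne_y₂⟩
  have hy₂ : S.y₂ ≠ S.c 1 := fun h => by simpa [h, S.star_c] using S.star_y₂
  exact specRad_sup_edge_lt_of_pendant x₀_ne_x₁.symm
    (fun h => not_forest_sup_edge_y_adj S.star_x₀ S.star_x₁ h.symm) (Or.inl hx₁c) (Or.inr hx₁y₂)
    hy₂ (hxy ▸ hly₁) (ne_of_mem_leaves hl (by simp [S.star_x₀]))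
    (fun u => forest_sup_edge_y_adj_iff hl hly₁ (ne_of_mem_leaves hl (by simp [S.star_y₂])))
    hconn hx

lemma card_leaves_zero_lt (hS : S.IsMin) (hV : 11 ≤ Fintype.card V) (hx₀ : S.x₀ = S.c 0) :
    (S.leaves 0).card < Fintype.card V / 3 := by
  classical
  exact (card_leaves_zero_lt_degree hx₀).trans_le (hS.degree_le hV _)

lemma x₁_ne_of_x₀_eq (hS : S.IsMin) (hV : 11 ≤ Fintype.card V) (hx₀ : S.x₀ = S.c 0) :
    S.x₁ ≠ S.c 1 := by
  intro hx₁
  obtain ⟨x, hx⟩ := exists_isPerronVector S.connected_graph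
  have hcard := S.card_leaves_add_three
  have hL₀ := hS.card_leaves_zero_lt hV hx₀
  have hL₁ := hS.card_leaves_le hV 1
  have hL₂ := hS.card_leaves_le hV 2
  rcases le_total (x (S.c 1)) (x (S.c 0)) with hle | hle
  · obtain ⟨l, hl⟩ := Finset.card_pos.mp (show 0 < (S.leaves 0).card by lia)
    exact (hS.lt_of_x₀_eq hV hx hx₀ hl).not_ge (hx₁ ▸ hle)
  · obtain ⟨l, hl, hly₁⟩ := Finset.exists_mem_ne (show 1 < (S.leaves 1).card by lia) S.y₁
    exact (hS.lt_of_x₁_eq hV hx hx₁ hl hly₁).not_ge (hx₀ ▸ hle)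

lemma card_leaves_zero_add_two_le (hS : S.IsMin) (hV : 11 ≤ Fintype.card V)
    (hx : IsPerronVector S.graph x) (hx₀ : S.x₀ = S.c 0) (hx₁ : S.x₁ ≠ S.c 1)
    (hlt : x (S.c 0) < x (S.c 1)) : (S.leaves 0).card + 2 ≤ Fintype.card V / 3 := by
  classical
  have hwalk := hx.degree_mul_add_le (v := S.c 0) (hx₀ ▸ graph_adj_x)
    (S.star_x₁ ▸ forest_le_graph (forest_adj_center (S.star_x₁.symm ▸ hx₁)))
    fun h => hlt.ne' (congrArg x h)
  have hpos := hx.pos (S.c 0)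
  have hdeg : (S.graph.degree (S.c 0) : ℝ) + 1 < (Fintype.card V / 3 : ℕ) + 1 := by
    refine lt_of_lt_of_le (lt_of_mul_lt_mul_right ?_ hpos.le) (hS.specRad_sq_le hV)
    linarith
  have hdeg' : S.graph.degree (S.c 0) < Fintype.card V / 3 := by
    exact_mod_cast lt_of_add_lt_add_right hdeg
  exact Nat.lt_of_le_of_lt (Nat.succ_le_of_lt (card_leaves_zero_lt_degree hx₀)) hdeg'

-- Here `x₁` is adjacent to both `c 0` and `c 1`, so it may be counted as a leaf of star `0`.
lemma lt_of_x₀_eq_of_x₁_ne (hS : S.IsMin) (hV : 11 ≤ Fintype.card V)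
    (hx : IsPerronVector S.graph x) (hx₀ : S.x₀ = S.c 0) (hx₁ : S.x₁ ≠ S.c 1)
    (hxy : S.x₁ ≠ S.y₁) (hl : l ∈ S.leaves 1) (hlx₁ : l ≠ S.x₁)
    (hly₁ : l ≠ S.y₁) : x (S.c 1) < x S.x₁ := by
  have hleaf : S.x₁ ≠ S.c (S.star S.x₁) := S.star_x₁.symm ▸ hx₁
  have hy₂ : S.y₂ ≠ S.x₁ := fun h => by simpa [h, S.star_x₁] using S.star_y₂
  let T := S.reassign S.x₁ 0 S.x₁ (S.c 1) hleaf hxy.symm hy₂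
    (Function.update_self ..) (by rw [Function.update_of_ne hx₁.symm, S.star_c])
  have hTS : T.graph = S.graph := hS.graph_eq_of_le (graph_reassign_le _ _ _ _ _
    (hx₀ ▸ graph_adj_x.symm) (S.star_x₁ ▸ forest_le_graph (forest_adj_center hleaf)))
  have hlT : l ∈ T.leaves 1 := by
    rw [mem_leaves] at hl ⊢
    exact ⟨(Function.update_of_ne hlx₁ _ _).trans hl.1, hl.2⟩
  exact (hS.of_graph_le hTS.le).lt_of_x₁_eq hV (hTS.symm ▸ hx) rfl hlT hly₁

lemma x₁_eq_of_x₀_eq (hS : S.IsMin) (hV : 11 ≤ Fintype.card V) (hx₀ : S.x₀ = S.c 0)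
    (hx₁ : S.x₁ ≠ S.c 1) : S.x₁ = S.y₁ := by
  by_contra hxy
  obtain ⟨x, hx⟩ := exists_isPerronVector S.connected_graph
  have hmid : 2 * x S.x₁ ≤ x (S.c 0) + x (S.c 1) := by
    rw [← hx₀, ← specRad_mul_apply_x₁ hx hx₁ hxy]
    exact mul_le_mul_of_nonneg_right (S.two_le_specRad hV) (hx.pos _).le
  have hcard := S.card_leaves_add_three
  have hL₁ := hS.card_leaves_le hV 1
  have hL₂ := hS.card_leaves_le hV 2
  rcases le_or_gt (x (S.c 1)) (x (S.c 0)) with hle | hlt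
  · obtain ⟨l, hl⟩ := Finset.card_pos.mp (show 0 < (S.leaves 0).card by lia)
    linarith [hS.lt_of_x₀_eq hV hx hx₀ hl]
  · have hL₀ := hS.card_leaves_zero_add_two_le hV hx hx₀ hx₁ hlt
    obtain ⟨l, hl, hlxy⟩ := Finset.exists_mem_notMem_of_card_lt_card
      (s := {S.x₁, S.y₁}) (Finset.card_le_two.trans_lt (show 2 < (S.leaves 1).card by lia))
    simp only [Finset.mem_insert, Finset.mem_singleton, not_or] at hlxy
    linarith [hS.lt_of_x₀_eq_of_x₁_ne hV hx hx₀ hx₁ hxy hl hlxy.1 hlxy.2]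

lemma x₁_ne (hS : S.IsMin) (hV : 11 ≤ Fintype.card V) : S.x₁ ≠ S.c 1 := by
  intro hx₁
  have hx₀ : S.x₀ ≠ S.c 0 := fun hx₀ => hS.x₁_ne_of_x₀_eq hV hx₀ hx₁
  have hc₀ : S.c 0 ≠ S.x₀ := hx₀.symm
  have hx₀c₁ : S.x₀ ≠ S.c 1 := fun h => by simpa [h, S.star_c] using S.star_x₀
  have hy₁ : S.y₁ ≠ S.x₀ := fun h => by simpa [h, S.star_x₀] using S.star_y₁
  have hy₂ : S.y₂ ≠ S.x₀ := fun h => by simpa [h, S.star_x₀] using S.star_y₂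
  let T := S.reassign S.x₀ 1 (S.c 0) S.x₀ (S.star_x₀.symm ▸ hx₀) hy₁ hy₂
    (by rw [Function.update_of_ne hc₀, S.star_c]) (Function.update_self ..)
  have hTS : T.graph ≤ S.graph := graph_reassign_le _ _ _ _ _ (hx₁ ▸ graph_adj_x)
    (S.star_x₀ ▸ forest_le_graph (forest_adj_center (S.star_x₀.symm ▸ hx₀))).symm
  exact hy₁ ((hS.of_graph_le hTS).x₁_eq_of_x₀_eq hV rfl hx₀c₁).symm

lemma x₁_ne_y₁ (hS : S.IsMin) (hV : 11 ≤ Fintype.card V) : S.x₁ ≠ S.y₁ := by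
  intro hxy
  have hx₁ := hS.x₁_ne hV
  have hleaf : S.x₁ ∈ S.leaves 1 := mem_leaves.mpr ⟨S.star_x₁, hx₁⟩
  have hTS := graph_recenter_le hleaf fun l hl =>
    (hS.eq_y₁_of_x₁_eq_y₁ hx₁ hxy hl).trans hxy.symm
  exact (hS.of_graph_le hTS).x₁_ne hV (Function.update_self 1 S.x₁ S.c).symm

lemma x₀_ne (hS : S.IsMin) (hV : 11 ≤ Fintype.card V) : S.x₀ ≠ S.c 0 := fun hx₀ =>
  hS.x₁_ne_y₁ hV (hS.x₁_eq_of_x₀_eq hV hx₀ (hS.x₁_ne hV))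

lemma exists_mem_leaves_zero_ne (hS : S.IsMin) (hV : 11 ≤ Fintype.card V) :
    ∃ l ∈ S.leaves 0, l ≠ S.x₀ := by
  by_contra! hsub
  have hleaf : S.x₀ ∈ S.leaves 0 := mem_leaves.mpr ⟨S.star_x₀, hS.x₀_ne hV⟩
  have hTS := graph_recenter_le hleaf hsub
  exact (hS.of_graph_le hTS).x₀_ne hV (Function.update_self 0 S.x₀ S.c).symm

end IsMin

end Minimal

end StarChain

namespace StarChain

section Spine

variable {V : Type*} (S : StarChain V)

/-- The centres and the ends of the joining edges, in the order `v1 v4 v5 v2 v6 v7 v3` that they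
have along the path when they are distinct. -/
def spine : Fin 7 → V := ![S.c 0, S.x₀, S.x₁, S.c 1, S.y₁, S.y₂, S.c 2]

variable {S}

lemma star_spine (j : Fin 7) : S.star (S.spine j) = ![0, 0, 1, 1, 1, 2, 2] j := by
  fin_cases j
  exacts [S.star_c 0, S.star_x₀, S.star_x₁, S.star_c 1, S.star_y₁, S.star_y₂, S.star_c 2]

lemma injective_spine (hx₀ : S.x₀ ≠ S.c 0) (hx₁ : S.x₁ ≠ S.c 1) (hxy : S.x₁ ≠ S.y₁)
    (hy₁ : S.y₁ ≠ S.c 1) (hy₂ : S.y₂ ≠ S.c 2) : Function.Injective S.spine := by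
  intro i j h
  have hstar := congrArg S.star h
  rw [star_spine, star_spine] at hstar
  fin_cases i <;> fin_cases j <;> simp_all [spine, eq_comm]

lemma spine_rev (j : Fin 7) : S.rev.spine j = S.spine j.rev := by
  fin_cases j <;> rfl

variable [Fintype V] [DecidableEq V] (S)

/-- The vertices of star `i` off the spine. -/
def pendants (i : Fin 3) : Finset V := {v | S.star v = i ∧ ∀ j, v ≠ S.spine j}

/-- A numbering of the vertices of a star chain compatible with that of `G2graph`. -/
noncomputable def label : Fin 7 ⊕ (Fin (S.pendants 0).card ⊕ Fin (S.pendants 1).card ⊕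
    Fin (S.pendants 2).card) → V :=
  Sum.elim S.spine (Sum.elim (fun j => (S.pendants 0).equivFin.symm j)
    (Sum.elim (fun j => (S.pendants 1).equivFin.symm j)
      fun j => (S.pendants 2).equivFin.symm j))

variable {S}

lemma mem_pendants {i : Fin 3} {v : V} :
    v ∈ S.pendants i ↔ S.star v = i ∧ ∀ j, v ≠ S.spine j := by
  simp only [pendants, Finset.mem_filter_univ]

lemma star_label (u) : S.star (S.label u) = (G2chain _ _ _).star u := by
  have hstar (i : Fin 3) (j) : S.star ((S.pendants i).equivFin.symm j) = i :=
    (mem_pendants.mp ((S.pendants i).equivFin.symm j).2).1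
  rcases u with j | j | j | j
  exacts [star_spine j, hstar 0 j, hstar 1 j, hstar 2 j]

lemma bijective_label (hspine : Function.Injective S.spine) : Function.Bijective S.label := by
  have hne {i : Fin 3} (j) (k) : S.spine k ≠ (S.pendants i).equivFin.symm j :=
    ((mem_pendants.mp ((S.pendants i).equivFin.symm j).2).2 k).symm
  have hinj (i : Fin 3) :
      Function.Injective fun j => ((S.pendants i).equivFin.symm j : V) :=
    Subtype.val_injective.comp (Equiv.injective _)
  have hdisj {i i' : Fin 3} (h : i ≠ i') (j) (j') :
      ((S.pendants i).equivFin.symm j : V) ≠ (S.pendants i').equivFin.symm j' := fun heq => by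
    have hj := mem_pendants.mp ((S.pendants i).equivFin.symm j).2
    have hj' := mem_pendants.mp ((S.pendants i').equivFin.symm j').2
    exact h (hj.1.symm.trans ((congrArg S.star heq).trans hj'.1))
  refine ⟨hspine.sumElim ((hinj 0).sumElim ((hinj 1).sumElim (hinj 2) (hdisj (by decide))) ?_) ?_,
    fun v => ?_⟩
  · rintro j (j' | j')
    exacts [hdisj (by decide) j j', hdisj (by decide) j j']
  · rintro k (j | j | j)
    exacts [hne j k, hne j k, hne j k]
  · by_cases hv : ∃ k, S.spine k = v
    · obtain ⟨k, rfl⟩ := hv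
      exact ⟨Sum.inl k, rfl⟩
    · push Not at hv
      have hmem : v ∈ S.pendants (S.star v) := mem_pendants.mpr ⟨rfl, fun k => (hv k).symm⟩
      generalize S.star v = i at hmem
      fin_cases i
      · exact ⟨.inr (.inl ((S.pendants 0).equivFin ⟨v, hmem⟩)), by simp [label]⟩
      · exact ⟨.inr (.inr (.inl ((S.pendants 1).equivFin ⟨v, hmem⟩))), by simp [label]⟩
      · exact ⟨.inr (.inr (.inr ((S.pendants 2).equivFin ⟨v, hmem⟩))), by simp [label]⟩

lemma card_pendants_add_seven (hspine : Function.Injective S.spine) :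
    (S.pendants 0).card + (S.pendants 1).card + (S.pendants 2).card + 7 = Fintype.card V := by
  rw [← Fintype.card_of_bijective (bijective_label hspine)]
  simp only [Fintype.card_sum, Fintype.card_fin]
  lia

lemma nonempty_iso_G2graph (hspine : Function.Injective S.spine) :
    Nonempty (S.graph ≃g
      G2graph (S.pendants 0).card (S.pendants 1).card (S.pendants 2).card) := by
  let e := Equiv.ofBijective S.label (bijective_label hspine)
  have hmap : (G2chain _ _ _).map e = S := by
    refine StarChain.ext (funext fun v => ?_) (funext fun i => ?_) rfl rfl rfl rfl
    · exact (star_label _).symm.trans (congrArg S.star (e.apply_symm_apply v))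
    · fin_cases i <;> rfl
  have hiso := (G2chain _ _ _).mapIso e
  rw [hmap, G2chain_graph] at hiso
  exact ⟨hiso.symm⟩

lemma mem_pendants_zero {l : V} (hl : l ∈ S.leaves 0) (hlx₀ : l ≠ S.x₀) : l ∈ S.pendants 0 := by
  obtain ⟨hstar, hlc⟩ := mem_leaves.mp hl
  refine mem_pendants.mpr ⟨hstar, fun j hj => ?_⟩
  have hj₀ : ![0, 0, 1, 1, 1, 2, 2] j = (0 : Fin 3) := by rw [← star_spine (S := S), ← hj, hstar]
  obtain rfl | rfl : j = 0 ∨ j = 1 := by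
    clear hj
    revert j
    decide
  exacts [hlc hj, hlx₀ hj]

lemma pendants_rev (i : Fin 3) : S.rev.pendants i = S.pendants i.rev := by
  ext v
  rw [mem_pendants, mem_pendants]
  refine and_congr Fin.rev_eq_iff ?_
  simp only [spine_rev]
  exact Fin.revPerm.forall_congr_right (q := fun j => v ≠ S.spine j)

lemma IsMin.injective_spine (hS : S.IsMin) (hV : 11 ≤ Fintype.card V) :
    Function.Injective S.spine :=
  StarChain.injective_spine (hS.x₀_ne hV) (hS.x₁_ne hV) (hS.x₁_ne_y₁ hV) (hS.rev.x₁_ne hV)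
    (hS.rev.x₀_ne hV)

lemma IsMin.one_le_card_pendants_zero (hS : S.IsMin) (hV : 11 ≤ Fintype.card V) :
    1 ≤ (S.pendants 0).card := by
  obtain ⟨l, hl, hlx₀⟩ := hS.exists_mem_leaves_zero_ne hV
  exact Finset.card_pos.mpr ⟨l, mem_pendants_zero hl hlx₀⟩

lemma IsMin.exists_iso_G2graph (hS : S.IsMin) (hV : 11 ≤ Fintype.card V) :
    ∃ a b c : ℕ, 1 ≤ a ∧ 1 ≤ c ∧ a + b + c = Fintype.card V - 7 ∧
      Nonempty (S.graph ≃g G2graph a b c) := by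
  have hspine := hS.injective_spine hV
  have hcard := card_pendants_add_seven hspine
  have hc := hS.rev.one_le_card_pendants_zero hV
  rw [pendants_rev] at hc
  exact ⟨_, _, _, hS.one_le_card_pendants_zero hV, hc, by lia, nonempty_iso_G2graph hspine⟩

end Spine

end StarChain

theorem minimizer_domNum_three_form_general {V : Type*} [Fintype V] [DecidableEq V]
    (hV : 11 ≤ Fintype.card V) {G : SimpleGraph V} (hconn : G.Connected) (hdom : domNum G = 3)
    (hmin : ∀ H : SimpleGraph V, H.Connected → domNum H = 3 → specRad G ≤ specRad H) :
    ∃ a b c : ℕ, 1 ≤ a ∧ 1 ≤ c ∧ a + b + c = Fintype.card V - 7 ∧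
      Nonempty (G ≃g G2graph a b c) := by
  have hle_of_sq_le {T : StarChain V}
      (hT : specRad T.graph ^ 2 ≤ (Fintype.card V / 3 : ℕ) + 1) : specRad G ≤ specRad T.graph :=
    hmin _ T.connected_graph (T.domNum_graph_eq_three hV hT)
  obtain ⟨S, hSG⟩ := StarChain.exists_graph_le hconn hdom
  obtain ⟨T₀, hT₀⟩ := exists_starChain_specRad_sq_le hV
  have hlow (T : StarChain V) : specRad G ≤ specRad T.graph := by
    by_contra! hlt
    have hlt₀ : specRad T.graph ≤ specRad T₀.graph := hlt.le.trans (hle_of_sq_le hT₀)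
    have h2 := T.two_le_specRad hV
    exact hlt.not_ge (hle_of_sq_le ((pow_le_pow_left₀ (by linarith) hlt₀ 2).trans hT₀))
  obtain rfl : S.graph = G := by
    by_contra hne
    exact (hlow S).not_gt (specRad_lt_specRad S.connected_graph (lt_of_le_of_ne hSG hne))
  exact StarChain.IsMin.exists_iso_G2graph hlow hV

theorem minimizer_domNum_three_form (n : ℕ) (hn : 11 ≤ n)
    (G : SimpleGraph (Fin n)) (hconn : G.Connected) (hdom : domNum G = 3)
    (hmin : ∀ H : SimpleGraph (Fin n), H.Connected → domNum H = 3 →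
      specRad G ≤ specRad H) :
    ∃ a b c : ℕ, 1 ≤ a ∧ 1 ≤ c ∧ a + b + c = n - 7 ∧
      Nonempty (G ≃g G2graph a b c) := by
  simpa only [Fintype.card_fin] using minimizer_domNum_three_form_general
    ((Fintype.card_fin n).symm ▸ hn) hconn hdom hmin
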